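/- Let n : ℕ and let ⟨·,·⟩ denote the Minkowski bilinear form on ℝ^{n+1}. Suppose K, D, F, G, N : Fin (n+1) → ℝ satisfy ⟨K,K⟩ = −4, ⟨K,D⟩ = 0, ⟨D,D⟩ = 14, ⟨K,F⟩ = −2, ⟨D,F⟩ = 4, ⟨F,F⟩ = 0, ⟨K,G⟩ = −1, ⟨D,G⟩ = 1, ⟨G,G⟩ = −1, ⟨F,G⟩ = 0, ⟨K,N⟩ = 0, ⟨D,N⟩ = 0, ⟨F,N⟩ = 0, ⟨G,N⟩ = 1 and ⟨N,N⟩ = −2. Then 2·K + D = 3·F + 2·G + N. -/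

import Mathlib

/-- The Minkowski (Lorentzian) bilinear form on `ℝ^{n+1}`:
`⟨x, y⟩ = x 0 * y 0 - ∑_{i=1}^{n} x i * y i`. -/
def mink (n : ℕ) (x y : Fin (n + 1) → ℝ) : ℝ :=
  x 0 * y 0 - ∑ i ∈ Finset.Ioi (0 : Fin (n + 1)), x i * y i

theorem mink_index (n : ℕ) (M v : Fin (n + 1) → ℝ) (hM : 0 < mink n M M)
    (hMv : mink n M v = 0) (hv : mink n v v = 0) : v = 0 := by
  unfold mink at hM hMv hv
  have cs := Finset.sum_mul_sq_le_sq_mul_sq (Finset.Ioi (0 : Fin (n + 1))) M v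
  simp only [← pow_two] at hM hv
  have h0 : v 0 = 0 := by
    by_contra h
    have hp : 0 < v 0 ^ 2 := by positivity
    rw [← sub_eq_zero.mp hMv, ← sub_eq_zero.mp hv] at cs
    nlinarith [mul_pos hM hp]
  rw [h0] at hv
  have hs : ∑ i ∈ Finset.Ioi (0 : Fin (n + 1)), v i ^ 2 = 0 := by linarith
  rw [Finset.sum_eq_zero_iff_of_nonneg (fun i _ => sq_nonneg _)] at hs
  funext i
  by_cases hi : i = 0
  · rw [hi, h0]; rfl
  · exact pow_eq_zero_iff (two_ne_zero) |>.mp (hs i (Finset.mem_Ioi.mpr (Fin.pos_of_ne_zero hi)))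

theorem mink_comm (n : ℕ) (x y : Fin (n + 1) → ℝ) : mink n x y = mink n y x := by
  simp only [mink, mul_comm]

theorem mink_add (n : ℕ) (x y z : Fin (n + 1) → ℝ) :
    mink n x (y + z) = mink n x y + mink n x z := by
  simp only [mink, Pi.add_apply, mul_add, Finset.sum_add_distrib]; ring

theorem mink_smul (n : ℕ) (c : ℝ) (x y : Fin (n + 1) → ℝ) :
    mink n x (c • y) = c * mink n x y := by
  simp only [mink, Pi.smul_apply, smul_eq_mul, mul_left_comm _ c, ← Finset.mul_sum]; ring

theorem mink_add_left (n : ℕ) (x y z : Fin (n + 1) → ℝ) :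
    mink n (y + z) x = mink n y x + mink n z x := by
  rw [mink_comm, mink_add, mink_comm n x y, mink_comm n x z]

theorem mink_smul_left (n : ℕ) (c : ℝ) (x y : Fin (n + 1) → ℝ) :
    mink n (c • y) x = c * mink n y x := by
  rw [mink_comm, mink_smul, mink_comm n x y]

/-- Step 2 of Proposition 3.4 (case k = 11): `2K_W + D ≡ 3F + 2G + N₀`. -/
theorem case11_M2_decomposition (n : ℕ) (K D F G N : Fin (n + 1) → ℝ)
    (hKK : mink n K K = -4) (hKD : mink n K D = 0) (hDD : mink n D D = 14)
    (hKF : mink n K F = -2) (hDF : mink n D F = 4) (hFF : mink n F F = 0)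
    (hKG : mink n K G = -1) (hDG : mink n D G = 1) (hGG : mink n G G = -1)
    (hFG : mink n F G = 0)
    (hKN : mink n K N = 0) (hDN : mink n D N = 0) (hFN : mink n F N = 0)
    (hGN : mink n G N = 1) (hNN : mink n N N = -2) :
    2 • K + D = 3 • F + 2 • G + N := by
  have hv : (2 : ℝ) • K + D + (-3 : ℝ) • F + (-2 : ℝ) • G + (-1 : ℝ) • N = 0 := by
    apply mink_index n (K + D)
    all_goals
      simp only [mink_add, mink_smul, mink_add_left, mink_smul_left]
      simp only [mink_comm n D K, mink_comm n F K, mink_comm n F D, mink_comm n G K,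
        mink_comm n G D, mink_comm n G F, mink_comm n N K, mink_comm n N D, mink_comm n N F,
        mink_comm n N G, hKK, hKD, hDD, hKF, hDF, hFF, hKG, hDG, hGG, hFG, hKN, hDN, hFN, hGN, hNN]
      norm_num
  funext i
  have := congrFun hv i
  simp at this ⊢
  linarith
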